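/- arXiv:math/0605318 — 2 statements merged into one kernel-verified Lean document; each statement's English description precedes it below -/
import Mathlib

section
/- The polynomial r₃(x) = x⁸ − 17x⁷ + 117x⁶ − 418x⁵ + 827x⁴ − 898x³ + 502x² − 124x + 9 is irreducible over ℚ and has Galois group S₈ over ℚ. -/
open Polynomial

theorem c23a {k : Type*} [Field k] (b : k) (hp : (23 : k) = 0)
    (hg : b^7 + 4*b^6 - 6*b^5 + 8*b^4 + 6*b^3 + 10*b^2 - b - 7 = 0) : b^3404825447 = b := by
  have h1 : b^1 = b := pow_one b
  have h3 : b^3 = b^3 := rfl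
  have h6 : b^6 = b^6 := rfl
  have h12 : b^12 = 10*b^6 + 3*b^5 - 2*b^4 - 2*b^3 + 6*b^2 - 3*b - 3 := by
    have e : b^12 = b^6*b^6 := by rw [← pow_add]
    rw [e, h6]; linear_combination (b^5 - 4*b^4 - b^3 - 5*b^2 - 6*b - 7)*hg + (b^10 - b^9 + 2*b^8 + b^7 + 3*b^6 + 2*b^5 + 5*b^4 + 4*b^3 + b^2 - 2*b - 2)*hp
  have h25 : b^25 = 7*b^6 + b^5 + 11*b^3 - 4*b^2 - 4*b - 4 := by
    have e : b^25 = b^12*b^12*b := by rw [← pow_add, ← pow_succ]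
    rw [e, h12]; linear_combination (8*b^6 + 5*b^5 - 3*b^4 - 5*b^3 + 3*b^2 - 6*b + 6)*hg + (4*b^13 + b^12 - 3*b^10 + b^9 - 6*b^8 - 2*b^7 + 9*b^5 - 4*b^4 - 2*b^3 - b^2 - b + 2)*hp
  have h50 : b^50 = 9*b^6 + 10*b^5 - 2*b^4 - 10*b^3 + 6*b^2 + 3*b + 6 := by
    have e : b^50 = b^25*b^25 := by rw [← pow_add]
    rw [e, h25]; linear_combination (3*b^5 + 2*b^4 + 11*b^3 + 6*b^2 - 3*b - 8)*hg + (2*b^12 + 4*b^9 - b^8 - 6*b^7 - 3*b^6 - 11*b^5 - b^4 + 5*b^3 + 7*b^2 - 2)*hp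
  have h101 : b^101 = -6*b^6 + 11*b^5 - 4*b^4 - 5*b^3 + 3*b^2 - 2*b + 11 := by
    have e : b^101 = b^50*b^50*b := by rw [← pow_add, ← pow_succ]
    rw [e, h50]; linear_combination (-11*b^6 - 6*b^5 - b^4 - 3*b^3 + 9*b^2 - 8*b - 5)*hg + (4*b^13 + 10*b^12 + b^11 - 7*b^10 + b^9 + 14*b^8 + 18*b^7 - 7*b^6 - 4*b^5 - 4*b^4 + 8*b^3 + 6*b^2 - b - 2)*hp
  have h202 : b^202 = 6*b^6 - 10*b^5 + 8*b^4 + 3*b^3 + 4*b^2 - 11*b - 5 := by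
    have e : b^202 = b^101*b^101 := by rw [← pow_add]
    rw [e, h101]; linear_combination (-10*b^5 - 6*b^3 + 7*b^2 + 4*b + 5)*hg + (2*b^12 - 4*b^11 + 5*b^10 + 3*b^9 - 6*b^8 + 13*b^7 - 9*b^6 + 8*b^5 - 9*b^4 - 10*b^3 + 3*b^2 + 7)*hp
  have h405 : b^405 = -8*b^6 + 9*b^5 - 7*b^4 - 4*b^2 + 4*b - 6 := by
    have e : b^405 = b^202*b^202*b := by rw [← pow_add, ← pow_succ]
    rw [e, h202]; linear_combination (-10*b^6 - 11*b^5 - 4*b^4 - 2*b^3 - b + 9)*hg + (2*b^13 - 3*b^12 + 8*b^11 - 4*b^10 + 8*b^9 + b^8 + 16*b^7 - 5*b^6 - 6*b^5 - 9*b^4 + b^3 + b^2 + b + 3)*hp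
  have h811 : b^811 = -4*b^6 - 8*b^5 + 9*b^4 + 11*b^3 - 11*b^2 + b + 5 := by
    have e : b^811 = b^405*b^405*b := by rw [← pow_add, ← pow_succ]
    rw [e, h405]; linear_combination (-5*b^6 - 9*b^5 - 8*b^4 + 7*b^3 + b^2 + b + 4)*hg + (3*b^13 - 5*b^12 + 9*b^11 - 5*b^10 + 6*b^9 + 3*b^8 + 13*b^7 - 8*b^6 - b^5 - 6*b^4 + 3*b^3 - 3*b^2 + 2*b + 1)*hp
  have h1623 : b^1623 = -10*b^6 - 5*b^5 + 7*b^4 - 6*b^3 + 6*b^2 - 7*b + 2 := by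
    have e : b^1623 = b^811*b^811*b := by rw [← pow_add, ← pow_succ]
    rw [e, h811]; linear_combination (-7*b^6 - 4*b^4 + b^3 + 7*b^2 + 9*b - 3)*hg + (b^13 + 4*b^12 - 2*b^11 - 7*b^10 + 19*b^8 - 5*b^7 - 13*b^6 + 4*b^5 - 2*b^4 - 7*b^3 + 4*b^2 + 4*b - 1)*hp
  have h3247 : b^3247 = -5*b^6 + 9*b^5 + 3*b^3 + 3*b^2 + 8*b + 2 := by
    have e : b^3247 = b^1623*b^1623*b := by rw [← pow_add, ← pow_succ]
    rw [e, h1623]; linear_combination (8*b^6 - b^5 + 6*b^4 + 2*b^3 + b - 3)*hg + (4*b^13 + 3*b^12 - 3*b^11 - 2*b^10 - b^9 - 5*b^8 + 5*b^7 - 8*b^6 + 4*b^5 - 2*b^4 + 4*b^3 - 1)*hp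
  have h6494 : b^6494 = -2*b^6 - 9*b^5 + 2*b^4 - 2*b^3 + 2*b^2 + 3*b := by
    have e : b^6494 = b^3247*b^3247 := by rw [← pow_add]
    rw [e, h3247]; linear_combination (2*b^5 - 6*b^4 + 2*b^3 + 2*b^2 - 5*b + 6)*hg + (b^12 - 4*b^11 + 5*b^10 - 4*b^9 + 3*b^8 + 5*b^6 + 5*b^5 - b^4 + 4*b^3 + b^2 + 2)*hp
  have h12988 : b^12988 = 8*b^6 - 8*b^5 - 6*b^4 - 6*b^3 - 5*b^2 + 6*b + 4 := by
    have e : b^12988 = b^6494*b^6494 := by rw [← pow_add]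
    rw [e, h6494]; linear_combination (4*b^5 - 3*b^4 - 6*b^3 - 8*b^2 + 5*b - 6)*hg + (b^11 + 5*b^10 - 2*b^9 + b^8 - 4*b^7 + 6*b^6 + 3*b^5 + 3*b^4 - 2*b^3 + b^2 + b - 2)*hp
  have h25976 : b^25976 = -11*b^6 - 7*b^5 + 8*b^4 - 8*b^3 + b^2 + 4*b - 1 := by
    have e : b^25976 = b^12988*b^12988 := by rw [← pow_add]
    rw [e, h12988]; linear_combination (-5*b^5 + 7*b^4 + 2*b^3 + 5*b^2 - 5*b - 9)*hg + (3*b^12 - 5*b^11 - 4*b^10 + 3*b^9 + b^8 + 13*b^7 - 2*b^6 - 7*b^5 + b^3 + 5*b^2 - 2)*hp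
  have h51953 : b^51953 = 11*b^6 - 4*b^5 + 4*b^4 - 6*b^3 + 9*b^2 - 9*b - 4 := by
    have e : b^51953 = b^25976*b^25976*b := by rw [← pow_add, ← pow_succ]
    rw [e, h25976]; linear_combination (6*b^6 - 8*b^5 + 10*b^4 - 3*b^3 + b^2 + b + 6)*hg + (5*b^13 + 6*b^12 - 3*b^11 - 3*b^10 + 11*b^9 - 15*b^8 + 4*b^7 - b^6 - 3*b^5 + b^4 - 2*b^3 - 3*b^2 + b + 2)*hp
  have h103907 : b^103907 = -8*b^6 + 9*b^5 - 10*b^4 - 2*b^3 - 4*b^2 + 8*b - 5 := by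
    have e : b^103907 = b^51953*b^51953*b := by rw [← pow_add, ← pow_succ]
    rw [e, h51953]; linear_combination (6*b^6 + 3*b^5 - 10*b^4 + 7*b^3 - b^2 + 6*b - 4)*hg + (5*b^13 - 5*b^12 + 6*b^11 - 7*b^10 + 5*b^9 - 12*b^8 + 2*b^7 + b^6 + b^5 - 7*b^4 + b^3 + 5*b^2 + 2*b - 1)*hp
  have h207814 : b^207814 = -9*b^6 - 11*b^5 - 6*b^4 + 10*b^3 - 4*b^2 + 11*b + 11 := by
    have e : b^207814 = b^103907*b^103907 := by rw [← pow_add]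
    rw [e, h103907]; linear_combination (-5*b^5 - 9*b^4 - 6*b^3 + 10*b - 2)*hg + (3*b^12 - 5*b^11 + 11*b^10 - 6*b^9 + 8*b^8 - 2*b^7 + 22*b^6 - 13*b^5 - b^4 - 8*b^3 + 6*b^2 - b)*hp
  have h415628 : b^415628 = -4*b^6 + 7*b^5 - 10*b^4 + 6*b^3 + 2*b^2 + 10*b - 9 := by
    have e : b^415628 = b^207814*b^207814 := by rw [← pow_add]
    rw [e, h207814]; linear_combination (-11*b^5 - 11*b^4 - 3*b^2 + 8*b + 11)*hg + (4*b^12 + 11*b^11 + 9*b^10 - b^9 + 2*b^8 - 5*b^7 - 7*b^6 - 23*b^5 - 3*b^4 - b^3 - 4*b^2 + 13*b + 9)*hp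
  have h831256 : b^831256 = -3*b^6 - 4*b^5 + 3*b^4 - 3*b^2 + 2*b - 6 := by
    have e : b^831256 = b^415628*b^415628 := by rw [← pow_add]
    rw [e, h415628]; linear_combination (-7*b^5 - 5*b^4 - 8*b^3 + 8*b^2 + 9*b + 4)*hg + (b^12 - b^11 + 5*b^10 - 6*b^9 + 7*b^8 + 12*b^6 - 16*b^5 + 4*b^4 - 10*b^3 + 4*b^2 - 5*b + 5)*hp
  have h1662512 : b^1662512 = 4*b^6 + 9*b^5 - 4*b^4 - 7*b^3 - 7*b^2 + 8*b - 7 := by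
    have e : b^1662512 = b^831256*b^831256 := by rw [← pow_add]
    rw [e, h831256]; linear_combination (9*b^5 + 11*b^4 + 8*b^3 + 7*b^2 - 3*b + 7)*hg + (-b^11 - 3*b^9 - 4*b^8 - 7*b^7 - 11*b^6 + 3*b^5 - 2*b^4 + 2*b^3 + b^2 - 2*b + 4)*hp
  have h3325024 : b^3325024 = -6*b^6 - 5*b^5 - 11*b^4 - 10*b^2 - 9*b + 5 := by
    have e : b^3325024 = b^1662512*b^1662512 := by rw [← pow_add]
    rw [e, h1662512]; linear_combination (-7*b^5 + 8*b^4 - 2*b^3 + 7*b^2 + 2*b - 3)*hg + (b^12 + 4*b^11 - b^10 - b^9 - 10*b^8 + 3*b^7 + 4*b^6 - 8*b^5 - b^3 + 11*b^2 - 4*b + 1)*hp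
  have h6650049 : b^6650049 = 5*b^6 + 10*b^5 + 5*b^4 + b^3 - 2*b^2 + 2*b + 4 := by
    have e : b^6650049 = b^3325024*b^3325024*b := by rw [← pow_add, ← pow_succ]
    rw [e, h3325024]; linear_combination (-10*b^6 + 8*b^5 - 4*b^4 + b^3 + 2*b^2 - 9*b - 6)*hg + (2*b^13 + 4*b^12 + 3*b^11 + 11*b^10 + 9*b^9 + 13*b^8 + 10*b^7 + 3*b^6 + 2*b^5 + 10*b^4 + 5*b^3 - b^2 - 2*b - 2)*hp
  have h13300099 : b^13300099 = 11*b^6 + 2*b^5 + 3*b^4 - 10*b^3 + 2*b^2 + 7*b - 3 := by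
    have e : b^13300099 = b^6650049*b^6650049*b := by rw [← pow_add, ← pow_succ]
    rw [e, h6650049]; linear_combination (2*b^6 + b^4 - 2*b^3 + 4*b^2 + 3*b - 7)*hg + (b^13 + 4*b^12 + 7*b^11 + 4*b^10 + b^9 - 3*b^8 + 4*b^7 + 5*b^6 - b^5 + 5*b^2 + b - 2)*hp
  have h26600198 : b^26600198 = 2*b^6 + 5*b^5 - 2*b^4 + 11*b^3 + 4*b^2 - 4*b + 6 := by
    have e : b^26600198 = b^13300099*b^13300099 := by rw [← pow_add]
    rw [e, h13300099]; linear_combination (6*b^5 - 3*b^4 + 3*b^3 - 10*b^2 - 10*b - 7)*hg + (5*b^12 + b^11 + 5*b^10 - 12*b^9 + 3*b^8 + b^7 + 6*b^6 + 4*b^5 + 2*b^4 + 10*b^3 + b^2 - 5*b - 2)*hp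
  have h53200397 : b^53200397 = 2*b^6 - b^5 + 4*b^4 - 2*b^3 - 6*b^2 - 7*b - 3 := by
    have e : b^53200397 = b^26600198*b^26600198*b := by rw [← pow_add, ← pow_succ]
    rw [e, h26600198]; linear_combination (4*b^6 + 4*b^5 + 2*b^4 + 8*b^3 + 8*b^2 + 8*b - 7)*hg + (b^11 + 2*b^9 - 4*b^8 + 6*b^6 - 13*b^5 + 2*b^4 + 4*b^3 + 4*b^2 + 4*b - 2)*hp
  have h106400795 : b^106400795 = 6*b^6 - 8*b^5 - 9*b^4 + 4*b^3 - 7*b^2 + 5*b + 9 := by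
    have e : b^106400795 = b^53200397*b^53200397*b := by rw [← pow_add, ← pow_succ]
    rw [e, h53200397]; linear_combination (4*b^6 + 3*b^5 + 6*b^4 - 8*b^3 - 7*b^2 + 3*b - 2)*hg + (-b^12 + b^11 - 2*b^10 + b^9 - 7*b^8 - 4*b^7 + 3*b^6 + 7*b^5 + 9*b^4 + b^2 + b - 1)*hp
  have h212801590 : b^212801590 = -11*b^6 - 5*b^5 - 10*b^4 + 6*b^3 + 2*b^2 - 4*b - 8 := by
    have e : b^212801590 = b^106400795*b^106400795 := by rw [← pow_add]
    rw [e, h106400795]; linear_combination (-10*b^5 - 10*b^4 + 5*b^3 + 8*b^2 + 2*b + 7)*hg + (2*b^12 - 2*b^11 - 3*b^10 + 8*b^9 + 3*b^8 + 11*b^7 + 7*b^6 - 19*b^5 - 12*b^4 - b^3 - 5*b^2 + 5*b + 6)*hp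
  have h425603180 : b^425603180 = -9*b^6 - 8*b^5 + 10*b^4 - 11*b^2 - 8*b + 2 := by
    have e : b^425603180 = b^212801590*b^212801590 := by rw [← pow_add]
    rw [e, h212801590]; linear_combination (6*b^5 - 6*b^4 + 6*b^3 - 2*b^2 + 6*b + 1)*hg + (5*b^12 + 4*b^11 + 13*b^10 - 6*b^9 + 2*b^8 - 7*b^7 + 13*b^6 + 6*b^5 + 2*b^4 - 6*b^3 - b^2 + 5*b + 3)*hp
  have h851206361 : b^851206361 = -10*b^6 + 11*b^4 - 7*b^3 - 5*b^2 - 6*b - 4 := by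
    have e : b^851206361 = b^425603180*b^425603180*b := by rw [← pow_add, ← pow_succ]
    rw [e, h425603180]; linear_combination (-11*b^6 + 4*b^5 + 9*b^4 + 8*b^3 + 9*b^2 + b + 6)*hg + (4*b^13 + 8*b^12 - 9*b^11 - 4*b^10 + 15*b^9 + 15*b^8 - 11*b^7 - 21*b^6 + 4*b^5 + 4*b^4 + 2*b^3 - b^2 + b + 2)*hp
  have h1702412723 : b^1702412723 = -1 := by
    have e : b^1702412723 = b^851206361*b^851206361*b := by rw [← pow_add, ← pow_succ]
    rw [e, h851206361]; linear_combination (8*b^6 - 9*b^5 + 2*b^4 - 9*b^3 - 6*b^2 + 9*b - 10)*hg + (4*b^13 - b^12 - 6*b^11 + b^10 + 13*b^9 - 5*b^8 + 5*b^7 + 7*b^6 - 2*b^5 + 9*b^4 - b^3 + 5*b^2 + 3*b - 3)*hp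
  have h3404825447 : b^3404825447 = b := by
    have e : b^3404825447 = b^1702412723*b^1702412723*b := by rw [← pow_add, ← pow_succ]
    rw [e, h1702412723]; linear_combination (0)*hg + (0)*hp
  exact h3404825447

theorem c23b {k : Type*} [Field k] (b : k) (hp : (23 : k) = 0)
    (hg : b^7 + 4*b^6 - 6*b^5 + 8*b^4 + 6*b^3 + 10*b^2 - b - 7 = 0) : b^23 ≠ b := by
  have h1 : b^1 = b := pow_one b
  have h2 : b^2 = b^2 := rfl
  have h5 : b^5 = b^5 := rfl
  have h11 : b^11 = -7*b^6 + 5*b^5 - b^4 + 11*b^3 + 2*b^2 + 5*b + 4 := by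
    have e : b^11 = b^5*b^5*b := by rw [← pow_add, ← pow_succ]
    rw [e, h5]; linear_combination (b^4 - 4*b^3 - b^2 - 5*b - 6)*hg + (b^9 - b^8 + 2*b^7 + b^6 + 2*b^5 + 4*b^4 + 2*b^3 + 2*b^2 - 2*b - 2)*hp
  have h23 : b^23 = -8*b^6 - 3*b^5 + 10*b^4 - 7*b^3 - 10*b - 5 := by
    have e : b^23 = b^11*b^11*b := by rw [← pow_add, ← pow_succ]
    rw [e, h11]; linear_combination (3*b^6 + 10*b^5 - 6*b^4 + 11*b^3 - 3*b^2 + 10*b - 4)*hg + (2*b^13 - 4*b^12 + b^11 - 5*b^10 - 4*b^9 - 2*b^8 - 4*b^7 + 9*b^6 - b^5 + 3*b^4 + 2*b^3 + 3*b^2 + 4*b - 1)*hp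
  intro hb
  rw [h23] at hb
  apply one_ne_zero (α := k)
  have hb' := hb.symm
  linear_combination ((7*b^5 + 2*b^4 + b^3 + 8*b^2 + 6*b + 8)*hg + (2*b^6 + 7*b^5 + 4*b^4 + 10*b^3 + 4*b^2 + 7*b - 7)*hb' + (-b^12 - 4*b^11 - 4*b^9 - 7*b^8 - 4*b^7 - 7*b^6 - b^5 - 18*b^4 - 6*b^3 - 5*b^2 + 4*b + 4)*hp)

theorem c79a {k : Type*} [Field k] (b : k) (hp : (79 : k) = 0)
    (hg : b^5 + 39*b^4 + 33*b^3 + 13*b^2 - 5*b + 21 = 0) : b^3077056399 = b := by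
  have h1 : b^1 = b := pow_one b
  have h2 : b^2 = b^2 := rfl
  have h5 : b^5 = -39*b^4 - 33*b^3 - 13*b^2 + 5*b - 21 := by
    have e : b^5 = b^2*b^2*b := by rw [← pow_add, ← pow_succ]
    rw [e, h2]; linear_combination (1)*hg + (0)*hp
  have h11 : b^11 = -36*b^4 - 19*b^3 - 30*b^2 + 3*b - 30 := by
    have e : b^11 = b^5*b^5*b := by rw [← pow_add, ← pow_succ]
    rw [e, h5]; linear_combination (20*b^4 - 23*b^3 - 30*b^2 + 4*b + 24)*hg + (19*b^9 + 23*b^8 + 30*b^7 + 27*b^6 + 34*b^5 + b^4 + b^3 + 2*b^2 + 6*b - 6)*hp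
  have h22 : b^22 = -18*b^4 + 20*b^3 - 32*b^2 - 30*b - 14 := by
    have e : b^22 = b^11*b^11 := by rw [← pow_add]
    rw [e, h11]; linear_combination (32*b^3 - 38*b^2 + 24*b + 36)*hg + (16*b^8 + 2*b^7 + 37*b^6 + 10*b^5 + 18*b^4 - 18*b^3 + 29*b^2 - 6*b + 2)*hp
  have h45 : b^45 = 7*b^4 + 15*b^3 + 18*b^2 + 11*b - 26 := by
    have e : b^45 = b^22*b^22*b := by rw [← pow_add, ← pow_succ]
    rw [e, h22]; linear_combination (8*b^4 - 5*b^3 - 18*b^2 + 10*b + 5)*hg + (4*b^9 - 13*b^8 + 19*b^7 + 7*b^6 + 8*b^5 + 11*b^4 + 19*b^3 + 15*b^2 - 1)*hp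
  have h91 : b^91 = 32*b^4 - 14*b^3 - 24*b^2 - 30*b + 23 := by
    have e : b^91 = b^45*b^45*b := by rw [← pow_add, ← pow_succ]
    rw [e, h45]; linear_combination (-30*b^4 + 37*b^3 + 24*b^2 + 33*b + 29)*hg + (b^9 + 17*b^8 - 14*b^6 - 31*b^5 - 27*b^4 - 36*b^3 - 16*b^2 + 2*b - 8)*hp
  have h183 : b^183 = -36*b^4 + 8*b^3 - 25*b^2 - 30*b + 18 := by
    have e : b^183 = b^91*b^91*b := by rw [← pow_add, ← pow_succ]
    rw [e, h91]; linear_combination (-3*b^4 + 11*b^3 - 11*b^2 - 37*b + 33)*hg + (13*b^9 - 10*b^8 - 21*b^7 - 14*b^6 + 57*b^5 + 13*b^4 - 14*b^3 - 22*b^2 + 19*b - 9)*hp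
  have h366 : b^366 = 15*b^4 - 31*b^3 - 27*b^2 + 29*b + 20 := by
    have e : b^366 = b^183*b^183 := by rw [← pow_add]
    rw [e, h183]; linear_combination (32*b^3 - 7*b^2 - 25*b + 22)*hg + (16*b^8 - 23*b^7 + 14*b^6 + 32*b^5 - 12*b^4 + 9*b^3 - 3*b^2 - 6*b - 2)*hp
  have h733 : b^733 = 36*b^4 - 34*b^3 - 27*b^2 + 13*b - 11 := by
    have e : b^733 = b^366*b^366*b := by rw [← pow_add, ← pow_succ]
    rw [e, h366]; linear_combination (-12*b^4 + 12*b^3 + 13*b - 7)*hg + (3*b^9 - 6*b^8 + b^7 + 29*b^6 - 15*b^5 - 34*b^4 - 5*b^3 + 17*b^2 + b + 2)*hp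
  have h1467 : b^1467 = -14*b^4 - 35*b^3 + 14*b^2 + 25*b + 35 := by
    have e : b^1467 = b^733*b^733*b := by rw [← pow_add, ← pow_succ]
    rw [e, h733]; linear_combination (32*b^4 + 17*b^3 + 21*b^2 + 28*b - 28)*hg + (16*b^9 - 47*b^8 - 32*b^7 + 12*b^6 - 35*b^5 - 8*b^4 + 14*b^3 - 3*b^2 - 8*b + 7)*hp
  have h2934 : b^2934 = -31*b^4 + 5*b^3 + 17*b^2 + 32*b + 8 := by
    have e : b^2934 = b^1467*b^1467 := by rw [← pow_add]
    rw [e, h1467]; linear_combination (38*b^3 - 28*b^2 + 39*b - 6)*hg + (2*b^8 - 6*b^7 + 8*b^6 - 35*b^5 - 38*b^4 - 38*b^3 + 31*b^2 + 11*b + 17)*hp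
  have h5869 : b^5869 = -22*b^4 + 21*b^3 + 9*b^2 - 34*b - 3 := by
    have e : b^5869 = b^2934*b^2934*b := by rw [← pow_add, ← pow_succ]
    rw [e, h2934]; linear_combination (13*b^4 - 27*b^3 - 10*b^2 + 9*b + 34)*hg + (12*b^9 - 10*b^8 - 5*b^7 - 9*b^6 + 6*b^5 - 9*b^4 + 7*b^3 + 4*b^2 + b - 9)*hp
  have h11738 : b^11738 = -2*b^4 - 12*b^3 - 30*b^2 - b + 9 := by
    have e : b^11738 = b^5869*b^5869 := by rw [← pow_add]
    rw [e, h5869]; linear_combination (10*b^3 + 29*b^2 + 6*b)*hg + (6*b^8 - 17*b^7 - 18*b^6 + 7*b^5 - 22*b^4 - 11*b^3 + 7*b^2 + b)*hp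
  have h23476 : b^23476 = 19*b^4 - 37*b^3 + 27*b^2 - 31*b - 29 := by
    have e : b^23476 = b^11738*b^11738 := by rw [← pow_add]
    rw [e, h11738]; linear_combination (4*b^3 - 29*b^2 - b + 9)*hg + (-b^7 + 16*b^6 + 21*b^5 + 12*b^4 - 8*b^3 - b^2 + b - 1)*hp
  have h46952 : b^46952 = -34*b^4 + 27*b^3 - 35*b^2 + 6*b := by
    have e : b^46952 = b^23476*b^23476 := by rw [← pow_add]
    rw [e, h23476]; linear_combination (-34*b^3 - b^2 + b + 25)*hg + (5*b^8 - b^7 + 45*b^6 - 35*b^5 + 10*b^4 + 4*b^3 - 11*b^2 + 24*b + 4)*hp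
  have h93904 : b^93904 = 23*b^4 - b^3 - 16*b^2 - 38*b - 3 := by
    have e : b^93904 = b^46952*b^46952 := by rw [← pow_add]
    rw [e, h46952]; linear_combination (-29*b^3 + 6*b^2 - 39*b + 34)*hg + (15*b^8 - 9*b^7 + 49*b^6 - 8*b^5 + 16*b^4 - 5*b^3 - 9*b^2 + 13*b - 9)*hp
  have h187808 : b^187808 = 8*b^4 - 25*b^3 + 36*b^2 - 31*b - 14 := by
    have e : b^187808 = b^93904*b^93904 := by rw [← pow_add]
    rw [e, h93904]; linear_combination (-24*b^3 + 21*b^2 + 28*b - 29)*hg + (7*b^8 + 11*b^7 - 10*b^6 - 40*b^5 + 31*b^3 + 20*b^2 - 6*b + 8)*hp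
  have h375617 : b^375617 = -36*b^4 + 16*b^3 - 9*b^2 + 9*b - 5 := by
    have e : b^375617 = b^187808*b^187808*b := by rw [← pow_add, ← pow_succ]
    rw [e, h187808]; linear_combination (-15*b^4 + 27*b^3 + 11*b^2 - 24*b + 4)*hg + (b^9 + 2*b^8 + 8*b^7 - 43*b^6 + 35*b^5 - 7*b^4 - 5*b^3 + 6*b^2 + 9*b - 1)*hp
  have h751234 : b^751234 = 30*b^4 - 32*b^3 + 30*b^2 - 35*b + 19 := by
    have e : b^751234 = b^375617*b^375617 := by rw [← pow_add]
    rw [e, h375617]; linear_combination (32*b^3 - 30*b^2 - 9*b - 11)*hg + (16*b^8 - 30*b^7 + 13*b^6 + 25*b^4 - 8*b^3 + 11*b^2 + b + 3)*hp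
  have h1502468 : b^1502468 = 12*b^4 - 32*b^3 - 29*b^2 - 12*b - 35 := by
    have e : b^1502468 = b^751234*b^751234 := by rw [← pow_add]
    rw [e, h751234]; linear_combination (31*b^3 + 31*b^2 + 39*b - 15)*hg + (11*b^8 - 40*b^7 + 7*b^6 - 88*b^5 + 42*b^4 - 48*b^3 + 27*b^2 - 28*b + 9)*hp
  have h3004937 : b^3004937 = 7*b^4 - 24*b^3 + 32*b^2 - 32*b + 11 := by
    have e : b^3004937 = b^1502468*b^1502468*b := by rw [← pow_add, ← pow_succ]
    rw [e, h1502468]; linear_combination (-14*b^4 + 15*b^3 - 32*b^2 - 25*b + 7)*hg + (2*b^9 - 3*b^8 + 3*b^7 + 32*b^6 + 32*b^5 + 54*b^4 + 23*b^3 + 16*b^2 + 23*b - 2)*hp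
  have h6009875 : b^6009875 = 16*b^4 + 8*b^3 - 13*b^2 + 9*b + 10 := by
    have e : b^6009875 = b^3004937*b^3004937*b := by rw [← pow_add, ← pow_succ]
    rw [e, h3004937]; linear_combination (-30*b^4 - 35*b^3 - 18*b^2 + 26*b - 8)*hg + (b^9 + 11*b^8 + 43*b^7 + 3*b^6 + 33*b^5 - 31*b^4 + 29*b^3 - b^2 - 6*b + 2)*hp
  have h12019751 : b^12019751 = -23*b^4 + 29*b^3 + 35*b^2 + 10*b - 17 := by
    have e : b^12019751 = b^6009875*b^6009875*b := by rw [← pow_add, ← pow_succ]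
    rw [e, h6009875]; linear_combination (19*b^4 - 11*b^3 + 3*b^2 - 18)*hg + (3*b^9 - 6*b^8 - 7*b^7 + b^6 + 10*b^5 + 2*b^4 + 8*b^3 + 4*b^2 + 5)*hp
  have h24039503 : b^24039503 = -28*b^4 - 36*b^3 - 7*b^2 + 5*b - 12 := by
    have e : b^24039503 = b^12019751*b^12019751*b := by rw [← pow_add, ← pow_succ]
    rw [e, h12019751]; linear_combination (-24*b^4 - 3*b^3 - 18*b^2 - 3*b - 22)*hg + (7*b^9 - 5*b^8 + 2*b^7 + 34*b^6 + 41*b^5 + 18*b^4 - 4*b^3 + 4*b^2 + 3*b + 6)*hp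
  have h48079006 : b^48079006 = 34*b^4 - 11*b^3 + 26*b^2 - 30*b + 15 := by
    have e : b^48079006 = b^24039503*b^24039503 := by rw [← pow_add]
    rw [e, h24039503]; linear_combination (-6*b^3 + 38*b^2 + 9*b - 39)*hg + (10*b^8 + 28*b^7 + 5*b^6 - 16*b^5 + 13*b^4 + 29*b^3 - b^2 - 6*b + 12)*hp
  have h96158012 : b^96158012 = 38*b^4 - 23*b^3 + 12*b^2 + 12*b + 18 := by
    have e : b^96158012 = b^48079006*b^48079006 := by rw [← pow_add]
    rw [e, h48079006]; linear_combination (-29*b^3 - 12*b^2 - 4*b - 24)*hg + (15*b^8 + 5*b^7 + 42*b^6 - 21*b^5 + 43*b^4 - 6*b^3 + 28*b^2 - 12*b + 9)*hp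
  have h192316024 : b^192316024 = -8*b^4 - 14*b^3 + 35*b^2 - 19*b + 28 := by
    have e : b^192316024 = b^96158012*b^96158012 := by rw [← pow_add]
    rw [e, h96158012]; linear_combination (22*b^3 + b^2 - 35*b - 16)*hg + (18*b^8 - 33*b^7 + 9*b^6 + 18*b^5 + 36*b^4 + 7*b^2 + 14*b + 8)*hp
  have h384632049 : b^384632049 = 38*b^4 - 13*b^3 + 5*b^2 - 13*b - 6 := by
    have e : b^384632049 = b^192316024*b^192316024*b := by rw [← pow_add, ← pow_succ]
    rw [e, h192316024]; linear_combination (-15*b^4 + 19*b^3 + 22*b^2 + 9*b - 11)*hg + (b^9 + 10*b^8 - 8*b^7 - 25*b^6 - b^5 - 24*b^4 + 29*b^3 - 17*b^2 + 7*b + 3)*hp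
  have h769264099 : b^769264099 = -3*b^4 + 31*b^3 - 35*b^2 - 13*b - 7 := by
    have e : b^769264099 = b^384632049*b^384632049*b := by rw [← pow_add, ← pow_succ]
    rw [e, h384632049]; linear_combination (22*b^4 - 29*b^3 + 6*b^2 + 30*b - 26)*hg + (18*b^9 - 23*b^8 + 12*b^7 - 9*b^6 - 12*b^5 - 8*b^4 + 15*b^3 + 7*b^2 - 9*b + 7)*hp
  have h1538528199 : b^1538528199 = -1 := by
    have e : b^1538528199 = b^769264099*b^769264099*b := by rw [← pow_add, ← pow_succ]
    rw [e, h769264099]; linear_combination (9*b^4 + 16*b^3 + 13*b^2 - 5*b - 15)*hg + (-7*b^8 + 3*b^7 - 41*b^6 + b^5 + 12*b^4 + 12*b^3 + b^2 + b + 4)*hp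
  have h3077056399 : b^3077056399 = b := by
    have e : b^3077056399 = b^1538528199*b^1538528199*b := by rw [← pow_add, ← pow_succ]
    rw [e, h1538528199]; linear_combination (0)*hg + (0)*hp
  exact h3077056399

theorem c79b {k : Type*} [Field k] (b : k) (hp : (79 : k) = 0)
    (hg : b^2 - 8*b - 12 = 0) : b^79 ≠ b := by
  have h1 : b^1 = b := pow_one b
  have h2 : b^2 = 8*b + 12 := by
    have e : b^2 = b^1*b^1 := by rw [← pow_add]
    rw [e, h1]; linear_combination (1)*hg + (0)*hp
  have h4 : b^4 = -7*b - 36 := by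
    have e : b^4 = b^2*b^2 := by rw [← pow_add]
    rw [e, h2]; linear_combination (-15)*hg + (b^2 + b)*hp
  have h9 : b^9 = -33*b + 8 := by
    have e : b^9 = b^4*b^4*b := by rw [← pow_add, ← pow_succ]
    rw [e, h4]; linear_combination (-30*b + 27)*hg + (b^3 + 3*b^2 + 15*b + 4)*hp
  have h19 : b^19 = -b + 11 := by
    have e : b^19 = b^9*b^9*b := by rw [← pow_add, ← pow_succ]
    rw [e, h9]; linear_combination (-17*b - 32)*hg + (14*b^3 - 8*b^2 - 5*b - 5)*hp
  have h39 : b^39 = 21*b - 10 := by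
    have e : b^39 = b^19*b^19*b := by rw [← pow_add, ← pow_succ]
    rw [e, h19]; linear_combination (b - 14)*hg + (-2)*hp
  have h79 : b^79 = -b + 8 := by
    have e : b^79 = b^39*b^39*b := by rw [← pow_add, ← pow_succ]
    rw [e, h39]; linear_combination (-33*b + 27)*hg + (6*b^3 - 9*b^2 - b + 4)*hp
  intro hb
  rw [h79] at hb
  apply one_ne_zero (α := k)
  have hb' := hb.symm
  linear_combination ((31)*hg + (24*b - 17)*hb' + (-b^2 + 6*b + 3)*hp)

theorem c79c {k : Type*} [Field k] (b : k) (hp : (79 : k) = 0)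
    (hg : b^2 - 8*b - 12 = 0) : b^6241 = b := by
  have h1 : b^1 = b := pow_one b
  have h3 : b^3 = -3*b + 17 := by
    have e : b^3 = b^1*b^1*b := by rw [← pow_add, ← pow_succ]
    rw [e, h1]; linear_combination (b + 8)*hg + (b + 1)*hp
  have h6 : b^6 = -30*b + 2 := by
    have e : b^6 = b^3*b^3 := by rw [← pow_add]
    rw [e, h3]; linear_combination (9)*hg + (5)*hp
  have h12 : b^12 = -30*b - 19 := by
    have e : b^12 = b^6*b^6 := by rw [← pow_add]
    rw [e, h6]; linear_combination (31)*hg + (11*b^2 + 2*b + 5)*hp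
  have h24 : b^24 = -34*b + 22 := by
    have e : b^24 = b^12*b^12 := by rw [← pow_add]
    rw [e, h12]; linear_combination (31)*hg + (11*b^2 + 18*b + 9)*hp
  have h48 : b^48 = 10*b - 22 := by
    have e : b^48 = b^24*b^24 := by rw [← pow_add]
    rw [e, h24]; linear_combination (-29)*hg + (15*b^2 - 22*b + 2)*hp
  have h97 : b^97 = -18*b - 25 := by
    have e : b^97 = b^48*b^48*b := by rw [← pow_add, ← pow_succ]
    rw [e, h48]; linear_combination (21*b - 35)*hg + (b^3 - 3*b^2 + 6*b - 5)*hp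
  have h195 : b^195 = -20*b + 34 := by
    have e : b^195 = b^97*b^97*b := by rw [← pow_add, ← pow_succ]
    rw [e, h97]; linear_combination (8*b + 16)*hg + (4*b^3 + 12*b^2 + 11*b + 2)*hp
  have h390 : b^390 = 23*b + 31 := by
    have e : b^390 = b^195*b^195 := by rw [← pow_add]
    rw [e, h195]; linear_combination (5)*hg + (5*b^2 - 17*b + 15)*hp
  have h780 : b^780 = -30*b - 38 := by
    have e : b^780 = b^390*b^390 := by rw [← pow_add]
    rw [e, h390]; linear_combination (-24)*hg + (7*b^2 + 16*b + 9)*hp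
  have h1560 : b^1560 = -1 := by
    have e : b^1560 = b^780*b^780 := by rw [← pow_add]
    rw [e, h780]; linear_combination (31)*hg + (11*b^2 + 32*b + 23)*hp
  have h3120 : b^3120 = 1 := by
    have e : b^3120 = b^1560*b^1560 := by rw [← pow_add]
    rw [e, h1560]; linear_combination (0)*hg + (0)*hp
  have h6241 : b^6241 = b := by
    have e : b^6241 = b^3120*b^3120*b := by rw [← pow_add, ← pow_succ]
    rw [e, h3120]; linear_combination (0)*hg + (0)*hp
  exact h6241

theorem fac23 {k : Type*} [CommRing k] (b : k) (hp : (23 : k) = 0) :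
    b^8 - 17*b^7 + 117*b^6 - 418*b^5 + 827*b^4 - 898*b^3 + 502*b^2 - 124*b + 9 =
      (b + 2)*(b^7 + 4*b^6 - 6*b^5 + 8*b^4 + 6*b^3 + 10*b^2 - b - 7) := by
  linear_combination (-b^7 + 5*b^6 - 18*b^5 + 35*b^4 - 40*b^3 + 21*b^2 - 5*b + 1)*hp

theorem fac79 {k : Type*} [CommRing k] (b : k) (hp : (79 : k) = 0) :
    b^8 - 17*b^7 + 117*b^6 - 418*b^5 + 827*b^4 - 898*b^3 + 502*b^2 - 124*b + 9 =
      (b + 31)*(b^2 - 8*b - 12)*(b^5 + 39*b^4 + 33*b^3 + 13*b^2 - 5*b + 21) := by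
  linear_combination (-b^7 - 7*b^6 + 118*b^5 + 299*b^4 + 188*b^3 + 45*b^2 + 44*b + 99)*hp

theorem disc_cert {k : Type*} [CommRing k] (b : k) :
    (-14783346448*b^6 + 200347692198*b^5 - 1047355742593*b^4 + 2642253978828*b^3 - 3266741067172*b^2 + 1753178432764*b - 284341199771)*(b^8 - 17*b^7 + 117*b^6 - 418*b^5 + 827*b^4 - 898*b^3 + 502*b^2 - 124*b + 9) +
    (1847918306*b^7 - 28970287925*b^6 + 179776891311*b^5 - 559334869555*b^4 + 908975093128*b^3 - 727794667174*b^2 + 241841119453*b - 20964756827)*(8*b^7 - 119*b^6 + 702*b^5 - 2090*b^4 + 3308*b^3 - 2694*b^2 + 1004*b - 124) = 40559048609 := by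
  ring

noncomputable def rZ (R : Type*) [CommRing R] : R[X] :=
  X ^ 8 - 17 * X ^ 7 + 117 * X ^ 6 - 418 * X ^ 5 + 827 * X ^ 4 - 898 * X ^ 3
      + 502 * X ^ 2 - 124 * X + 9

theorem rZ_map {R S : Type*} [CommRing R] [CommRing S] (g : R →+* S) :
    (rZ R).map g = rZ S := by
  simp [rZ, Polynomial.map_ofNat]

theorem rZ_eval {R : Type*} [CommRing R] (b : R) :
    (rZ R).eval b = b^8 - 17*b^7 + 117*b^6 - 418*b^5 + 827*b^4 - 898*b^3 + 502*b^2 - 124*b + 9 := by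
  simp [rZ]

theorem rZ_natDegree (R : Type*) [CommRing R] [Nontrivial R] : (rZ R).natDegree = 8 := by
  unfold rZ
  compute_degree!

theorem rZ_monic (R : Type*) [CommRing R] [Nontrivial R] : (rZ R).Monic := by
  unfold rZ
  monicity!

theorem rZ_sep (k : Type*) [Field k] (h : (40559048609 : k) ≠ 0) : (rZ k).Separable := by
  have hd : derivative (rZ k) = 8*X^7 - 119*X^6 + 702*X^5 - 2090*X^4 + 3308*X^3 - 2694*X^2
      + 1004*X - 124 := by
    simp only [rZ, derivative_add, derivative_sub, derivative_mul, derivative_X_pow,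
      derivative_ofNat, derivative_X, map_natCast]
    push_cast
    ring
  have key := disc_cert (X : k[X])
  rw [← hd] at key
  change _ * rZ k + _ = _ at key
  have hu : C (40559048609 : k)⁻¹ * (40559048609 : k[X]) = 1 := by
    have : (40559048609 : k[X]) = C (40559048609 : k) := rfl
    rw [this, ← C_mul, inv_mul_cancel₀ h, C_1]
  have := congrArg (fun t => C (40559048609 : k)⁻¹ * t) key
  simp only [hu, mul_add, ← mul_assoc] at this
  exact ⟨_, _, this⟩

theorem perm_top {ρ : Type*} [Fintype ρ] [DecidableEq ρ] (hρ : Fintype.card ρ = 8)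
    (H : Subgroup (Equiv.Perm ρ)) (s c : Equiv.Perm ρ) (hs : s ∈ H) (hc : c ∈ H)
    (hsw : s.IsSwap) (hc1 : c ≠ 1) (hc7 : c ^ 7 = 1)
    (hm : ∀ z, ∃ h ∈ H, h z ≠ z) : H = ⊤ := by
  have : Fact (Nat.Prime 7) := ⟨by norm_num⟩
  have ho : orderOf c = 7 := orderOf_eq_prime hc7 hc1
  have hcyc : c.IsCycle := Equiv.Perm.isCycle_of_prime_order' (by rw [ho]; norm_num)
    (by rw [hρ, ho]; norm_num)
  have hsupp : c.support.card = 7 := by rw [← hcyc.orderOf, ho]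
  obtain ⟨z, hz⟩ : ∃ z, c.supportᶜ = {z} := by
    rw [← Finset.card_eq_one, Finset.card_compl, hρ, hsupp]
  have hzz : ∀ x, c x = x ↔ x = z := by
    intro x
    have : x ∈ c.supportᶜ ↔ x ∈ ({z} : Finset ρ) := by rw [hz]
    simpa using this
  have hcz : c z = z := (hzz z).2 rfl
  have tr : ∀ x y, x ≠ z → y ≠ z → ∃ g ∈ H, g z = z ∧ g x = y := by
    intro x y hx hy
    obtain ⟨i, hi⟩ := hcyc.sameCycle (fun h => hx ((hzz x).1 h)) (fun h => hy ((hzz y).1 h))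
    exact ⟨c ^ i, H.zpow_mem hc i, Equiv.Perm.zpow_apply_eq_self_of_apply_eq_self hcz i, hi⟩
  obtain ⟨m, hmH, hmz⟩ := hm z
  have tr' : ∀ x, ∃ g ∈ H, g x = z := by
    intro x
    by_cases hx : x = z
    · exact ⟨1, H.one_mem, by simpa using hx⟩
    · obtain ⟨g, hg, -, h2⟩ := tr x (m z) hx hmz
      exact ⟨m⁻¹ * g, H.mul_mem (H.inv_mem hmH) hg, by simp [h2]⟩
  have conj : ∀ g ∈ H, ∀ a b, Equiv.swap a b ∈ H → Equiv.swap (g a) (g b) ∈ H := by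
    intro g hg a b h
    have := H.mul_mem (H.mul_mem hg h) (H.inv_mem hg)
    rwa [← Equiv.swap_apply_apply] at this
  obtain ⟨a, b, hab, rfl⟩ := hsw
  obtain ⟨g, hg, hga⟩ := tr' a
  have h1 : Equiv.swap z (g b) ∈ H := by
    have := conj g hg a b hs
    rwa [hga] at this
  have hgb : g b ≠ z := by
    rw [← hga]; exact fun h => hab (g.injective h).symm
  have star : ∀ x, x ≠ z → Equiv.swap z x ∈ H := by
    intro x hx
    obtain ⟨k, hk, hkz, hkx⟩ := tr (g b) x hgb hx
    have := conj k hk _ _ h1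
    rwa [hkz, hkx] at this
  rw [eq_top_iff, ← Equiv.Perm.closure_isSwap, Subgroup.closure_le]
  rintro _ ⟨x, y, hxy, rfl⟩
  change Equiv.swap x y ∈ H
  by_cases hx : x = z
  · subst hx; exact star y hxy.symm
  by_cases hy : y = z
  · subst hy; rw [Equiv.swap_comm]; exact star x hx
  have := conj _ (star x hx) _ _ (star y hy)
  rwa [Equiv.swap_apply_left, Equiv.swap_apply_of_ne_of_ne hy hxy.symm] at this

open NumberField in
theorem frob_exists (K : Type) [Field K] [NumberField K] [IsGalois ℚ K] (p : ℕ) (hp : p.Prime) :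
    ∃ (k : Type) (_ : Field k) (_ : CharP k p) (φ : 𝓞 K →+* k) (σ : K ≃ₐ[ℚ] K),
      ∀ x y : 𝓞 K, (y : K) = σ x → φ y = φ x ^ p := by
  have : Fact p.Prime := ⟨hp⟩
  have hpz : Prime (p : ℤ) := Nat.prime_iff_prime_int.mp hp
  have hmax : (Ideal.span {(p : ℤ)}).IsMaximal :=
    PrincipalIdealRing.isMaximal_of_irreducible hpz.irreducible
  obtain ⟨Q, hQ, hlo⟩ := Ideal.exists_maximal_ideal_liesOver_of_isIntegral
    (S := 𝓞 K) (Ideal.span {(p : ℤ)})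
  have hund : Q.under ℤ = Ideal.span {(p : ℤ)} := hlo.over.symm
  have hmem : ((p : ℕ) : 𝓞 K) ∈ Q := by
    have : (p : ℤ) ∈ Q.under ℤ := by rw [hund]; exact Ideal.mem_span_singleton_self _
    simpa [Ideal.mem_comap] using this
  have hQ0 : Q ≠ ⊥ := by
    rintro rfl
    exact hp.ne_zero (by simpa using hmem)
  have hfin : Finite (𝓞 K ⧸ Q) := Ideal.finiteQuotientOfFreeOfNeBot Q hQ0
  obtain ⟨σ, hσ⟩ := IsArithFrobAt.exists_of_isInvariant ℤ (K ≃ₐ[ℚ] K) Q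
  let _ : Field (𝓞 K ⧸ Q) := Ideal.Quotient.field Q
  have hchar : CharP (𝓞 K ⧸ Q) p := by
    rw [CharP.charP_iff_prime_eq_zero hp, ← map_natCast (Ideal.Quotient.mk Q)]
    exact Ideal.Quotient.eq_zero_iff_mem.2 hmem
  refine ⟨𝓞 K ⧸ Q, inferInstance, hchar, Ideal.Quotient.mk Q, σ, ?_⟩
  intro x y hxy
  have hy : y = σ • x := by
    ext
    rw [hxy]
    rfl
  have h := hσ.mk_apply x
  rw [hund, Nat.card_congr (Int.quotientSpanNatEquivZMod p).toEquiv, Nat.card_zmod] at h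
  rw [hy]
  exact h

open NumberField in
theorem frob_exists' (K : Type) [Field K] [Algebra ℚ K] [FiniteDimensional ℚ K]
    [IsGalois ℚ K] (p : ℕ) (hp : p.Prime) :
    ∃ (k : Type) (_ : Field k) (_ : CharP k p) (φ : 𝓞 K →+* k) (σ : K ≃ₐ[ℚ] K),
      ∀ x y : 𝓞 K, (y : K) = σ x → φ y = φ x ^ p := by
  have : CharZero K := charZero_of_injective_algebraMap (algebraMap ℚ K).injective
  rename_i inst _ _
  obtain rfl : inst = DivisionRing.toRatAlgebra := Subsingleton.elim _ _
  have : NumberField K := { }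
  exact frob_exists K p hp

theorem sepQ : (rZ ℚ).Separable := rZ_sep ℚ (by norm_num)

section
variable (K : Type) [Field K] [Algebra ℚ K] [IsSplittingField ℚ K (rZ ℚ)]

theorem spl : ((rZ ℚ).map (algebraMap ℚ K)).Splits := IsSplittingField.splits K _

instance : Fact ((rZ ℚ).map (algebraMap ℚ K)).Splits := ⟨spl K⟩

abbrev Rt : Type := (rZ ℚ).rootSet K

theorem Rt_card : Fintype.card (Rt K) = 8 := by
  rw [card_rootSet_eq_natDegree sepQ (spl K), rZ_natDegree]

noncomputable def lam : (K ≃ₐ[ℚ] K) →* Equiv.Perm (Rt K) :=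
  (Gal.galActionHom (rZ ℚ) K).comp (Gal.restrict (rZ ℚ) K)

theorem lam_apply (σ : K ≃ₐ[ℚ] K) (x : Rt K) : ((lam K σ x : Rt K) : K) = σ x :=
  Gal.galActionHom_restrict _ _ _ _

variable {K}

theorem Rt_root (x : Rt K) : (rZ K).eval (x : K) = 0 := by
  have := (mem_rootSet.1 x.2).2
  rwa [← eval_map_algebraMap, rZ_map] at this

open NumberField

theorem Rt_int (x : Rt K) : IsIntegral ℤ (x : K) := by
  refine ⟨rZ ℤ, rZ_monic ℤ, ?_⟩
  rw [← eval_map, rZ_map, Rt_root]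

noncomputable def lift (x : Rt K) : 𝓞 K := ⟨x, Rt_int x⟩

theorem prod_lift : ∏ x : Rt K, (X - C (lift x)) = rZ (𝓞 K) := by
  classical
  have : CharZero K := charZero_of_injective_algebraMap (algebraMap ℚ K).injective
  apply Polynomial.map_injective (algebraMap (𝓞 K) K) RingOfIntegers.coe_injective
  rw [rZ_map, Polynomial.map_prod]
  have h : (rZ K) = ((rZ K).roots.map fun a => X - C a).prod := by
    refine Splits.eq_prod_roots_of_monic ?_ (rZ_monic _)
    have := spl K
    rwa [rZ_map] at this
  have hnd : (rZ K).roots.Nodup := nodup_roots (rZ_sep K (by norm_num))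
  have h2 : ((rZ K).roots.map fun a => X - C a).prod = ∏ a ∈ (rZ K).roots.toFinset, (X - C a) := by
    rw [Finset.prod, Multiset.toFinset_val, hnd.dedup]
  rw [h, h2]
  symm
  apply Finset.prod_bij' (fun a ha => (⟨a, by
      rw [mem_rootSet, ← eval_map_algebraMap, rZ_map]
      simp only [Multiset.mem_toFinset, mem_roots', IsRoot.def] at ha
      exact ⟨(rZ_monic ℚ).ne_zero, ha.2⟩⟩ : Rt K)) (fun x _ => (x : K))
  all_goals first
    | (intros; rfl)
    | (intros; simp; done)
    | (intro a ha
       simp only [Multiset.mem_toFinset, mem_roots', IsRoot.def]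
       exact ⟨(rZ_monic K).ne_zero, Rt_root a⟩)
    | (intro a ha
       rw [Polynomial.map_sub, Polynomial.map_X, Polynomial.map_C]
       rfl)

variable (K) in
theorem red (p : ℕ) (hp : p.Prime) (hD : ¬ p ∣ 40559048609) :
    ∃ (k : Type) (_ : Field k) (_ : CharP k p) (r : Rt K → k) (σ : K ≃ₐ[ℚ] K),
      Function.Injective r ∧ (∏ x : Rt K, (X - C (r x)) = rZ k) ∧
      ∀ (n : ℕ) x, r ((lam K σ ^ n) x) = r x ^ p ^ n := by
  have : IsGalois ℚ K := IsGalois.of_separable_splitting_field sepQ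
  have : FiniteDimensional ℚ K := IsSplittingField.finiteDimensional K (rZ ℚ)
  obtain ⟨k, _, _, φ, σ, h⟩ := frob_exists' K p hp
  have hprod : ∏ x : Rt K, (X - C (φ (lift x))) = rZ k := by
    rw [← rZ_map φ, ← prod_lift, Polynomial.map_prod]
    simp
  have hsep : (rZ k).Separable := by
    apply rZ_sep
    intro h0
    apply hD
    rw [← CharP.cast_eq_zero_iff k p]
    exact_mod_cast h0
  refine ⟨k, inferInstance, inferInstance, fun x => φ (lift x), σ, ?_, hprod, ?_⟩
  · rw [← hprod] at hsep
    exact (separable_prod_X_sub_C_iff).1 hsep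
  · intro n
    induction n with
    | zero => simp
    | succ n ih =>
      intro x
      rw [pow_succ', Equiv.Perm.mul_apply, pow_succ, pow_mul, ← ih]
      apply h
      exact lam_apply _ _ _

variable (K) in
theorem exists_seven : ∃ σ : K ≃ₐ[ℚ] K, lam K σ ≠ 1 ∧ lam K σ ^ 7 = 1 := by
  obtain ⟨k, _, _, r, σ, hinj, hprod, hr⟩ := red K 23 (by norm_num) (by norm_num)
  have hp : (23 : k) = 0 := by exact_mod_cast CharP.cast_eq_zero k 23
  have hroot : ∀ x, (r x + 2) = 0 ∨ r x^7 + 4*r x^6 - 6*r x^5 + 8*r x^4 + 6*r x^3 + 10*r x^2 - r x - 7 = 0 := by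
    intro x
    rw [← mul_eq_zero, ← fac23 _ hp, ← rZ_eval, ← hprod, eval_prod]
    exact Finset.prod_eq_zero (Finset.mem_univ x) (by simp)
  refine ⟨σ, ?_, ?_⟩
  · intro h1
    have hall : ∀ x, r x + 2 = 0 := by
      intro x
      refine (hroot x).resolve_right fun hg => c23b _ hp hg ?_
      have := hr 1 x
      rw [h1] at this
      simpa using this.symm
    have : Subsingleton (Rt K) := ⟨fun x y => hinj (by linear_combination hall x - hall y)⟩
    have := Fintype.card_le_one_iff_subsingleton.2 this
    rw [Rt_card] at this
    omega
  · ext1 x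
    apply hinj
    rw [hr]
    rcases hroot x with h | h
    · have h2 : r x ^ 23 = r x := by
        have : r x = -2 := by linear_combination h
        rw [this]
        linear_combination (-364722 : k) * hp
      simp only [show (23 ^ 7 : ℕ) = 23*23*23*23*23*23*23 by norm_num, pow_mul, h2]
      rfl
    · simpa using c23a _ hp h

variable (K) in
theorem exists_gal_swap [DecidableEq (Rt K)] : ∃ σ : K ≃ₐ[ℚ] K, (lam K σ).IsSwap := by
  obtain ⟨k, _, _, r, σ, hinj, hprod, hr⟩ := red K 79 (by norm_num) (by norm_num)
  have hp : (79 : k) = 0 := by exact_mod_cast CharP.cast_eq_zero k 79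
  have hroot : ∀ x, (r x + 31 = 0 ∨ r x^2 - 8*r x - 12 = 0) ∨
      r x^5 + 39*r x^4 + 33*r x^3 + 13*r x^2 - 5*r x + 21 = 0 := by
    intro x
    rw [← mul_eq_zero, ← mul_eq_zero, ← fac79 _ hp, ← rZ_eval, ← hprod, eval_prod]
    exact Finset.prod_eq_zero (Finset.mem_univ x) (by simp)
  have hfix : ∀ x, r x^2 - 8*r x - 12 ≠ 0 → (lam K σ ^ 5) x = x := by
    intro x hx
    apply hinj
    rw [hr]
    rcases hroot x with (h | h) | h
    · have h2 : r x ^ 79 = r x := by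
        have : r x = ((-31 : ℤ) : k) := by push_cast; linear_combination h
        have hF : Fact (Nat.Prime 79) := ⟨by norm_num⟩
        rw [this, ← frobenius_def, map_intCast]
      simp only [show (79 ^ 5 : ℕ) = 79*79*79*79*79 by norm_num, pow_mul, h2]
    · exact absurd h hx
    · simpa using c79a _ hp h
  refine ⟨σ ^ 5, ?_⟩
  rw [map_pow, ← Equiv.Perm.card_support_eq_two]
  apply le_antisymm
  · classical
    have hsub : (lam K σ ^ 5).support.image r ⊆
        (X ^ 2 - 8 * X - 12 : k[X]).roots.toFinset := by
      intro b hb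
      obtain ⟨x, hx, rfl⟩ := Finset.mem_image.1 hb
      have h0 : r x^2 - 8*r x - 12 = 0 := by
        by_contra hne
        exact (Equiv.Perm.mem_support.1 hx) (hfix x hne)
      have hne : (X ^ 2 - 8 * X - 12 : k[X]) ≠ 0 := by
        apply Monic.ne_zero
        monicity!
      simp [hne, h0]
    rw [← Finset.card_image_of_injective _ hinj]
    refine (Finset.card_le_card hsub).trans ((Multiset.toFinset_card_le _).trans
      ((card_roots' _).trans ?_))
    compute_degree
  · rw [← not_lt, Nat.lt_succ_iff]
    intro hle
    have h1 : lam K σ ^ 5 = 1 := Equiv.Perm.card_support_le_one.1 hle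
    have hnone : ∀ x, r x^2 - 8*r x - 12 ≠ 0 := by
      intro x hx
      apply c79b _ hp hx
      have h2 := c79c _ hp hx
      have h3 := hr 5 x
      rw [h1] at h3
      rw [show (79 ^ 5 : ℕ) = 6241*6241*79 by norm_num, pow_mul, pow_mul, h2, h2] at h3
      exact h3.symm
    have hdvd : (X ^ 2 - 8 * X - 12 : k[X]) ∣ rZ k := by
      have := fac79 (X : k[X]) (by rw [← C_ofNat, hp, C_0])
      refine ⟨(X + 31) * (X^5 + 39*X^4 + 33*X^3 + 13*X^2 - 5*X + 21), ?_⟩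
      unfold rZ
      rw [this]; ring
    have hspl : (rZ k).Splits := by
      rw [← hprod]
      exact Splits.prod fun x _ => Splits.X_sub_C _
    obtain ⟨b, hb⟩ := (hspl.of_dvd (rZ_monic k).ne_zero hdvd).exists_eval_eq_zero (by
      have : (X ^ 2 - 8 * X - 12 : k[X]).degree = 2 := by compute_degree!
      rw [this]; norm_num)
    have hb0 : (rZ k).eval b = 0 := eval_eq_zero_of_dvd_of_eval_eq_zero hdvd hb
    rw [← hprod, eval_prod, Finset.prod_eq_zero_iff] at hb0
    obtain ⟨x, -, hx⟩ := hb0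
    have : b = r x := by simpa [sub_eq_zero] using hx
    subst this
    exact hnone x (by simpa using hb)

theorem noint (m : ℤ) : (rZ ℤ).eval m ≠ 0 := by
  intro h
  have h2 : (rZ (ZMod 2)).eval (m : ZMod 2) = 0 := by
    have := congrArg (Int.castRingHom (ZMod 2)) h
    rw [← eval_map_apply, rZ_map] at this
    simpa using this
  rw [rZ_eval] at h2
  generalize (m : ZMod 2) = t at h2
  revert t
  decide

variable (K) in
theorem lam_surj : Function.Surjective (lam K) := by
  classical
  rw [← MonoidHom.range_eq_top]
  obtain ⟨s, hs⟩ := exists_gal_swap K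
  obtain ⟨c, hc1, hc7⟩ := exists_seven K
  refine perm_top (Rt_card K) _ _ _ ⟨s, rfl⟩ ⟨c, rfl⟩ hs hc1 hc7 ?_
  intro z
  by_contra! hz
  have : IsGalois ℚ K := IsGalois.of_separable_splitting_field sepQ
  have : FiniteDimensional ℚ K := IsSplittingField.finiteDimensional K (rZ ℚ)
  obtain ⟨q, hq⟩ := (IsGalois.mem_range_algebraMap_iff_fixed (F := ℚ) (z : K)).2 (fun σ => by
    rw [← lam_apply, hz _ ⟨σ, rfl⟩])
  have hq0 : (rZ ℚ).eval q = 0 := by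
    apply (algebraMap ℚ K).injective
    rw [map_zero, ← eval_map_apply, rZ_map, hq, Rt_root]
  obtain ⟨m, rfl⟩ := isInteger_of_is_root_of_monic (A := ℤ) (rZ_monic ℤ) (r := q)
    (by rw [← eval_map_algebraMap, rZ_map, hq0])
  apply noint m
  apply (algebraMap ℤ ℚ).injective_int
  rw [map_zero, ← eval_map_apply, rZ_map, hq0]

theorem rZ_irr (K : Type) [Field K] [Algebra ℚ K] [IsSplittingField ℚ K (rZ ℚ)] : Irreducible (rZ ℚ) := by
  classical
  have : FiniteDimensional ℚ K := IsSplittingField.finiteDimensional K (rZ ℚ)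
  have hne : Nonempty (Rt K) := by
    rw [← Fintype.card_pos_iff, Rt_card]; norm_num
  obtain ⟨x⟩ := hne
  have hi : IsIntegral ℚ (x : K) := .of_finite ℚ _
  have hdvd : minpoly ℚ (x : K) ∣ rZ ℚ := minpoly.dvd _ _ (mem_rootSet.1 x.2).2
  have hall : (rZ ℚ).rootSet K ⊆ (minpoly ℚ (x : K)).rootSet K := by
    intro y hy
    obtain ⟨σ, hσ⟩ := lam_surj K (Equiv.swap x ⟨y, hy⟩)
    have h1 : σ x = y := by rw [← lam_apply, hσ, Equiv.swap_apply_left]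
    rw [mem_rootSet]
    refine ⟨minpoly.ne_zero hi, ?_⟩
    rw [← h1, aeval_algEquiv, AlgHom.comp_apply, minpoly.aeval]
    simp
  have hcard : 8 ≤ (minpoly ℚ (x : K)).natDegree := by
    rw [← Rt_card K]
    calc Fintype.card (Rt K) = Set.ncard ((rZ ℚ).rootSet K) := by
          rw [← Nat.card_eq_fintype_card]; rfl
      _ ≤ Set.ncard ((minpoly ℚ (x : K)).rootSet K) := Set.ncard_le_ncard hall (Set.toFinite _)
      _ ≤ _ := ncard_rootSet_le _ _
  have : minpoly ℚ (x : K) = rZ ℚ := by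
    symm
    exact eq_of_monic_of_dvd_of_natDegree_le (minpoly.monic hi) (rZ_monic ℚ) hdvd
      (by rwa [rZ_natDegree])
  rw [← this]
  exact minpoly.irreducible hi

end

theorem stmt_16 :
    Irreducible (X ^ 8 - 17 * X ^ 7 + 117 * X ^ 6 - 418 * X ^ 5 + 827 * X ^ 4 - 898 * X ^ 3
      + 502 * X ^ 2 - 124 * X + 9 : Polynomial ℚ) ∧
    Nonempty ((X ^ 8 - 17 * X ^ 7 + 117 * X ^ 6 - 418 * X ^ 5 + 827 * X ^ 4 - 898 * X ^ 3
      + 502 * X ^ 2 - 124 * X + 9 : Polynomial ℚ).Gal ≃* Equiv.Perm (Fin 8)) := by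
  change Irreducible (rZ ℚ) ∧ Nonempty ((rZ ℚ).Gal ≃* Equiv.Perm (Fin 8))
  let K := (rZ ℚ).SplittingField
  let iA : Algebra ℚ K := SplittingField.instAlgebra_1 (rZ ℚ)
  have hK : IsSplittingField ℚ K (rZ ℚ) := IsSplittingField.splittingField (rZ ℚ)
  refine ⟨rZ_irr K, ⟨?_⟩⟩
  have hb : Function.Bijective (Gal.galActionHom (rZ ℚ) K) := by
    refine ⟨Gal.galActionHom_injective _ _, fun x => ?_⟩
    obtain ⟨σ, hσ⟩ := lam_surj K x
    exact ⟨_, hσ⟩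
  exact (MulEquiv.ofBijective _ hb).trans (Fintype.equivFinOfCardEq (Rt_card K)).permCongrHom
end

section
/- If f ∈ ℤ[x] is a monic irreducible polynomial of degree n whose discriminant is square-free, then the Galois group of f over ℚ is the full symmetric group S_n. -/
open Polynomial Finset
open scoped NumberField

theorem aux_iSup_inertia (K : Type*) [Field K] [NumberField K] [IsGalois ℚ K] :
    ⨆ m : MaximalSpectrum (𝓞 K), m.asIdeal.inertia Gal(K/ℚ) = ⊤ := by
  set N : Subgroup Gal(K/ℚ) := ⨆ m : MaximalSpectrum (𝓞 K), m.asIdeal.inertia Gal(K/ℚ) with hN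
  let F : IntermediateField ℚ K := IntermediateField.fixedField N
  have hGF : IsGaloisGroup N F K := IsGaloisGroup.subgroup Gal(K/ℚ) ℚ K N
  have hG1 : IsGaloisGroup Gal(K/ℚ) ℤ (𝓞 K) := IsGaloisGroup.of_isFractionRing Gal(K/ℚ) ℤ (𝓞 K) ℚ K
  have hG2 : IsGaloisGroup N (𝓞 F) (𝓞 K) := IsGaloisGroup.of_isFractionRing N (𝓞 F) (𝓞 K) F K
  have hF : Module.finrank ℚ F = 1 := by
    by_contra H
    obtain ⟨P, hP, hram⟩ := NumberField.exists_not_isUnramifiedAt_int (𝒪 := 𝓞 F) H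
    apply hram
    obtain ⟨Q, hQ, hQP⟩ := Ideal.exists_maximal_ideal_liesOver_of_isIntegral (S := 𝓞 K) P
    have : Module.Flat (𝓞 F) (𝓞 K) := inferInstance
    have h1 := Ideal.ramificationIdx_tower (R := ℤ) P Q
    have hp : (Q.under ℤ).IsPrime := inferInstance
    have c1 := Ideal.card_inertia_eq_ramificationIdxIn (G := Gal(K/ℚ)) (Q.under ℤ) Q
    have c2 := Ideal.card_inertia_eq_ramificationIdxIn (G := N) P Q
    rw [Ideal.ramificationIdxIn_eq_ramificationIdx _ Q Gal(K/ℚ)] at c1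
    rw [Ideal.ramificationIdxIn_eq_ramificationIdx _ Q N] at c2
    have hle : Q.inertia Gal(K/ℚ) ≤ N := le_iSup (fun m : MaximalSpectrum (𝓞 K) => m.asIdeal.inertia Gal(K/ℚ)) ⟨Q, hQ⟩
    have c3 : Nat.card (Q.inertia N) = Nat.card (Q.inertia Gal(K/ℚ)) := by
      rw [← Nat.card_congr (Subgroup.subgroupOfEquivOfLe hle).toEquiv]
      rfl
    rw [← Ideal.ramificationIdx_eq_one_iff]
    rw [← c1, ← c2, c3] at h1
    have : 0 < Nat.card (Q.inertia Gal(K/ℚ)) := Nat.card_pos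
    exact (Nat.eq_of_mul_eq_mul_right this (by simpa using h1)).symm
  have : F = ⊥ := IntermediateField.finrank_eq_one_iff.mp hF
  rw [← IntermediateField.fixingSubgroup_fixedField N]
  change F.fixingSubgroup = ⊤
  rw [this, IntermediateField.fixingSubgroup_bot]

theorem aux_matrix {n : ℕ} (H : Matrix (Fin n) (Fin n) ℤ) (p : ℤ) (hp : Prime p)
    (hn : 2 ≤ n) (h : ∀ i j, p ∣ H.adjugate i j) : p * p ∣ H.det := by
  choose B hB using h
  have e : H.adjugate = p • (Matrix.of B) := by ext i j; simp [hB]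
  have d := Matrix.det_adjugate H
  rw [e, Matrix.det_smul] at d
  simp only [Fintype.card_fin] at d
  have h1 : p ∣ H.det := by
    apply hp.dvd_of_dvd_pow (n := n - 1)
    rw [← d]
    exact (dvd_pow_self p (by omega)).mul_right _
  obtain ⟨c, hc⟩ := h1
  rw [hc]
  apply mul_dvd_mul_left
  apply hp.dvd_of_dvd_pow (n := n - 1)
  obtain ⟨k, rfl⟩ : ∃ k, n = k + 1 := ⟨n - 1, by omega⟩
  rw [hc, mul_pow, pow_succ, mul_assoc] at d
  simp only [Nat.add_sub_cancel] at d ⊢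
  have := mul_left_cancel₀ (pow_ne_zero _ hp.ne_zero) d
  exact ⟨_, this.symm⟩

/-- two collisions modulo an ideal kill the adjugate of the Vandermonde matrix -/
theorem aux_vand {S : Type*} [CommRing S] {n : ℕ} (v : Fin n → S)
    (a b c d : Fin n) (h1 : v a = v b) (h2 : v c = v d) (hab : a ≠ b) (hcd : c ≠ d)
    (hne : ({a, b} : Set (Fin n)) ≠ {c, d}) : (Matrix.vandermonde v).adjugate = 0 := by
  ext i j
  rw [Matrix.adjugate_apply, Matrix.zero_apply]
  have key : ∃ x y, x ≠ y ∧ x ≠ j ∧ y ≠ j ∧ v x = v y := by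
    by_contra! hk
    apply hne
    have := hk a b; have := hk c d; have := hk a c; have := hk a d; have := hk b c; have := hk b d
    grind
  obtain ⟨x, y, hxy, hx, hy, hv⟩ := key
  apply Matrix.det_zero_of_row_eq hxy
  rw [Matrix.updateRow_ne hx, Matrix.updateRow_ne hy]
  ext k
  simp [Matrix.vandermonde_apply, hv]

theorem aux_int {K : Type*} [Field K] [NumberField K] [IsGalois ℚ K] {n : ℕ} (f : ℤ[X])
    (η : Fin n → 𝓞 K) (hη : f.map (algebraMap ℤ (𝓞 K)) = ∏ i, (X - C (η i))) (k : ℕ) :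
    ∃ z : ℤ, (algebraMap ℤ (𝓞 K) z) = ∑ i, η i ^ k := by
  have hG1 : IsGaloisGroup Gal(K/ℚ) ℤ (𝓞 K) := IsGaloisGroup.of_isFractionRing Gal(K/ℚ) ℤ (𝓞 K) ℚ K
  apply hG1.isInvariant.isInvariant
  intro g
  let φ : 𝓞 K →+* 𝓞 K := MulSemiringAction.toRingHom Gal(K/ℚ) (𝓞 K) g
  have h1 : (f.map (algebraMap ℤ (𝓞 K))).map φ = f.map (algebraMap ℤ (𝓞 K)) := by
    rw [Polynomial.map_map]; congr 1; exact RingHom.ext_int _ _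
  rw [hη, Polynomial.map_prod] at h1
  simp only [Polynomial.map_sub, map_X, map_C] at h1
  have key : ∀ v : Fin n → 𝓞 K, (∏ i, (X - C (v i))).roots = Finset.univ.val.map v := by
    intro v
    rw [← roots_multiset_prod_X_sub_C (Finset.univ.val.map v), Multiset.map_map]
    rfl
  have h2 := congrArg Polynomial.roots h1
  rw [key, key] at h2
  have h3 := congrArg (fun s => (s.map (fun x => x ^ k)).sum) h2
  simp only [Multiset.map_map] at h3
  rw [Finset.smul_sum]
  simp only [smul_pow']
  exact h3

theorem aux_collision {K : Type*} [Field K] [NumberField K] [IsGalois ℚ K] {n : ℕ} (f : ℤ[X])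
    (hmonic : f.Monic)
    (η : Fin n → 𝓞 K) (hη : f.map (algebraMap ℤ (𝓞 K)) = ∏ i, (X - C (η i)))
    (D : ℤ)
    (hD : (D : 𝓞 K) = ∏ ij ∈ Finset.univ.filter (fun ij : Fin n × Fin n => ij.1 < ij.2),
      (η ij.1 - η ij.2) ^ 2)
    (hsqfree : Squarefree D) (m : MaximalSpectrum (𝓞 K)) :
    (f.rootSet (𝓞 K)).ncard ≤ (f.rootSet (𝓞 K ⧸ m.asIdeal)).ncard + 1 := by
  have hf : (f.map (algebraMap ℤ (𝓞 K))).Splits := by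
    rw [hη]; exact Polynomial.Splits.prod fun i _ => Polynomial.Splits.X_sub_C _
  have hm := m.isMaximal
  let π : 𝓞 K →ₐ[ℤ] 𝓞 K ⧸ m.asIdeal := Ideal.Quotient.mkₐ ℤ m.asIdeal
  have hroot : ∀ x ∈ f.rootSet (𝓞 K), ∃ i, η i = x := by
    intro x hx
    rw [Polynomial.mem_rootSet] at hx
    have := hx.2
    rw [← Polynomial.eval_map_algebraMap, hη, Polynomial.eval_prod, Finset.prod_eq_zero_iff] at this
    obtain ⟨i, -, hi⟩ := this
    exact ⟨i, by simpa [sub_eq_zero, eq_comm] using hi⟩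
  rw [← hf.image_rootSet_of_map_ne_zero π (hmonic.map _).ne_zero, Set.ncard_le_ncard_image_add_one_iff]
  intro a ha b hb c hc d hd hab hcd nab ncd
  obtain ⟨a, rfl⟩ := hroot a ha
  obtain ⟨b, rfl⟩ := hroot b hb
  obtain ⟨c, rfl⟩ := hroot c hc
  obtain ⟨d, rfl⟩ := hroot d hd
  by_contra hne
  have nab' : a ≠ b := fun h => nab (by rw [h])
  have hadj := aux_vand (fun i => π (η i)) a b c d hab hcd nab' (fun h => ncd (by rw [h]))
    (fun h => hne (by simpa [Set.image_insert_eq] using congrArg (Set.image η) h))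
  have hn : 2 ≤ n := by
    have := a.2; have := b.2
    have : a.1 ≠ b.1 := fun h => nab' (Fin.ext h)
    omega
  choose s hs using aux_int f η hη
  let H : Matrix (Fin n) (Fin n) ℤ := Matrix.of fun i j => s (i + j)
  let V := Matrix.vandermonde η
  have hH : H.map (algebraMap ℤ (𝓞 K)) = V.transpose * V := by
    ext1 i j
    have := hs (i + j)
    simp only [pow_add] at this
    simpa [H, V, Matrix.mul_apply, Matrix.vandermonde_apply] using this
  have hdet : H.det = D := by
    have : Function.Injective (algebraMap ℤ (𝓞 K)) := FaithfulSMul.algebraMap_injective _ _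
    apply this
    rw [RingHom.map_det, RingHom.mapMatrix_apply, hH, Matrix.det_mul, Matrix.det_transpose,
      Matrix.det_vandermonde, ← sq, eq_intCast, hD, Finset.prod_sigma', ← Finset.prod_pow]
    refine Finset.prod_bij' (fun x _ => (x.1, x.2)) (fun x _ => ⟨x.1, x.2⟩) ?_ ?_ ?_ ?_ ?_
    · intro x hx; simpa using hx
    · intro x hx; simpa using hx
    · intro x hx; rfl
    · intro x hx; rfl
    · intro x hx; ring
  have hadjH : (H.map (algebraMap ℤ (𝓞 K))).adjugate.map π = 0 := by
    have e1 : V.adjugate.map π = 0 := by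
      have e2 := RingHom.map_adjugate π.toRingHom V
      rw [RingHom.mapMatrix_apply] at e2
      refine e2.trans ?_
      rw [← hadj]
      congr 1
    rw [hH, Matrix.adjugate_mul_distrib]
    refine (Matrix.map_mul (f := π.toRingHom)).trans ?_
    change V.adjugate.map π * _ = 0
    rw [e1, zero_mul]
  obtain ⟨p, hp⟩ := IsPrincipalIdealRing.principal (m.asIdeal.under ℤ)
  have hp : m.asIdeal.under ℤ = Ideal.span {p} := hp
  have hp0 : p ≠ 0 := fun hp0 ↦ Ideal.IsMaximal.ne_bot_of_isIntegral_int m.asIdeal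
    (Ideal.eq_bot_of_comap_eq_bot (hp.trans (by simp [hp0])))
  have hpp : Prime p := by rw [← Ideal.span_singleton_prime hp0, ← hp]; infer_instance
  have := aux_matrix H p hpp hn (by
    intro i j
    rw [← Ideal.mem_span_singleton, ← hp, Ideal.mem_comap, ← Ideal.Quotient.eq_zero_iff_mem]
    have e := congrFun (congrFun hadjH i) j
    rw [← RingHom.mapMatrix_apply, ← RingHom.map_adjugate] at e
    exact e)
  rw [hdet] at this
  exact hpp.not_isUnit (hsqfree p this)

theorem aux_final (f : ℤ[X]) (hmonic : f.Monic)
    (q : ℚ[X]) (hq : q = f.map (algebraMap ℤ ℚ)) (hqirr : Irreducible q)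
    (K : Type) [Field K] [CharZero K] [A : Algebra ℚ K] [IsSplittingField ℚ K q]
    (n : ℕ) (ξ : Fin n → ℂ)
    (hroots : f.map (algebraMap ℤ ℂ) = ∏ i, (X - C (ξ i)))
    (D : ℤ)
    (hD : (D : ℂ) = ∏ ij ∈ Finset.univ.filter (fun ij : Fin n × Fin n => ij.1 < ij.2),
      (ξ ij.1 - ξ ij.2) ^ 2)
    (hsqfree : Squarefree D) :
    Nonempty (Gal(K/ℚ) ≃* Equiv.Perm (Fin n)) := by
  obtain rfl : A = DivisionRing.toRatAlgebra := Subsingleton.elim _ _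
  have hqm : q.Monic := by rw [hq]; exact hmonic.map _
  have : NumberField K :=
    { to_charZero := inferInstance, to_finiteDimensional := IsSplittingField.finiteDimensional K q }
  have : IsGalois ℚ K := IsGalois.of_separable_splitting_field (p := q) hqirr.separable
  let φ : K →ₐ[ℚ] ℂ := IsAlgClosed.lift
  have hqK : f.map (algebraMap ℤ K) = q.map (algebraMap ℚ K) := by
    rw [hq, Polynomial.map_map]; congr 1; exact RingHom.ext_int _ _
  have hsplit : (q.map (algebraMap ℚ K)).Splits := IsSplittingField.splits K q
  let ψ : 𝓞 K →+* ℂ := φ.toRingHom.comp (algebraMap (𝓞 K) K)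
  have hψ : Function.Injective ψ := φ.injective.comp (FaithfulSMul.algebraMap_injective (𝓞 K) K)
  have hex : ∀ i, ∃ y : 𝓞 K, ψ y = ξ i := by
    intro i
    have h1 : (f.map (algebraMap ℤ ℂ)).eval (ξ i) = 0 := by
      rw [hroots, Polynomial.eval_prod]
      exact Finset.prod_eq_zero (Finset.mem_univ i) (by simp)
    have h2 : ((q.map (algebraMap ℚ K)).map φ.toRingHom).eval (ξ i) = 0 := by
      rw [← hqK, Polynomial.map_map, ← h1]; congr 2; exact RingHom.ext_int _ _
    obtain ⟨y, hy⟩ : ∃ y, φ y = ξ i := by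
      have h3 := hsplit.map φ.toRingHom
      have h4 := hsplit.roots_map φ.toRingHom
      have h5 : ξ i ∈ ((q.map (algebraMap ℚ K)).map φ.toRingHom).roots :=
        (mem_roots ((hqm.map _).map _).ne_zero).mpr h2
      rw [h4, Multiset.mem_map] at h5
      obtain ⟨y, -, hy⟩ := h5
      exact ⟨y, hy⟩
    have hint : IsIntegral ℤ y := by
      refine ⟨f, hmonic, ?_⟩
      apply φ.injective
      rw [map_zero, ← h1, Polynomial.eval_map, ← hy]
      change φ.toRingHom _ = _
      rw [Polynomial.hom_eval₂]
      congr 1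
      exact RingHom.ext_int _ _
    exact ⟨⟨y, hint⟩, hy⟩
  choose η hη using hex
  have hηp : f.map (algebraMap ℤ (𝓞 K)) = ∏ i, (X - C (η i)) := by
    apply Polynomial.map_injective ψ hψ
    rw [Polynomial.map_map, Polynomial.map_prod]
    simp only [Polynomial.map_sub, map_X, map_C, hη]
    rw [← hroots]; congr 1; exact RingHom.ext_int _ _
  have hηD : (D : 𝓞 K) = ∏ ij ∈ Finset.univ.filter (fun ij : Fin n × Fin n => ij.1 < ij.2),
      (η ij.1 - η ij.2) ^ 2 := by
    apply hψ
    simp [hη, hD]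
  have hηinj : Function.Injective η := by
    have h0 : (D : ℂ) ≠ 0 := by exact_mod_cast hsqfree.ne_zero
    have hlt : ∀ i j : Fin n, i < j → η i ≠ η j := by
      intro i j hij e
      apply h0
      rw [hD]
      apply Finset.prod_eq_zero (i := (i, j)) (by simpa using hij)
      simp [← hη, e]
    intro i j e
    rcases lt_trichotomy i j with h | h | h
    · exact (hlt i j h e).elim
    · exact h
    · exact (hlt j i h e.symm).elim
  have hmem : ∀ x, x ∈ f.rootSet (𝓞 K) ↔ ∃ i, η i = x := by
    intro x
    rw [Polynomial.mem_rootSet, ← Polynomial.eval_map_algebraMap, hηp, Polynomial.eval_prod, Finset.prod_eq_zero_iff]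
    simp [hmonic.ne_zero, sub_eq_zero, eq_comm]
  have hsp : (f.map (algebraMap ℤ (𝓞 K))).Splits := by
    rw [hηp]; exact Polynomial.Splits.prod fun i _ => Polynomial.Splits.X_sub_C _
  have htrans : MulAction.IsPretransitive Gal(K/ℚ) (f.rootSet (𝓞 K)) := by
    constructor
    intro x y
    have hmin : ∀ z ∈ f.rootSet (𝓞 K), q = minpoly ℚ (z : K) := by
      intro z hz
      apply minpoly.eq_of_irreducible_of_monic hqirr _ hqm
      rw [hq, Polynomial.aeval_map_algebraMap, Polynomial.aeval_algebraMap_apply, (Polynomial.mem_rootSet.mp hz).2, map_zero]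
    obtain ⟨g, hg⟩ := (Normal.minpoly_eq_iff_mem_orbit K).mp ((hmin y y.2).symm.trans (hmin x x.2))
    refine ⟨g, ?_⟩
    ext
    exact hg
  have hsurj := hsp.surjective_toPermHom_of_iSup_inertia_eq_top (G := Gal(K/ℚ))
    (aux_collision f hmonic η hηp D hηD hsqfree) (aux_iSup_inertia K)
  have hinj : Function.Injective (MulAction.toPermHom Gal(K/ℚ) (f.rootSet (𝓞 K))) := by
    intro g h e
    have heq : (g : K →ₐ[ℚ] K) = h := by
      apply AlgHom.ext_of_adjoin_eq_top (IsSplittingField.adjoin_rootSet K q)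
      intro x hx
      have hx0 : aeval x f = 0 := by
        have := (Polynomial.mem_rootSet.mp hx).2
        rwa [hq, Polynomial.aeval_map_algebraMap] at this
      have hint : IsIntegral ℤ x := ⟨f, hmonic, hx0⟩
      let x' : 𝓞 K := ⟨x, hint⟩
      have hx' : x' ∈ f.rootSet (𝓞 K) := by
        rw [Polynomial.mem_rootSet]
        refine ⟨hmonic.ne_zero, ?_⟩
        apply FaithfulSMul.algebraMap_injective (𝓞 K) K
        rw [← Polynomial.aeval_algebraMap_apply, map_zero]
        exact hx0
      have := congrArg (fun (y : f.rootSet (𝓞 K)) => ((y : 𝓞 K) : K))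
        (Equiv.congr_fun e ⟨x', hx'⟩)
      exact this
    ext x
    exact DFunLike.congr_fun heq x
  let e : Fin n ≃ f.rootSet (𝓞 K) := Equiv.ofBijective (fun i => ⟨η i, (hmem _).mpr ⟨i, rfl⟩⟩)
    ⟨fun i j h => hηinj (congrArg Subtype.val h), fun ⟨x, hx⟩ => by
      obtain ⟨i, rfl⟩ := (hmem x).mp hx; exact ⟨i, rfl⟩⟩
  exact ⟨(MulEquiv.ofBijective _ ⟨hinj, hsurj⟩).trans e.symm.permCongrHom⟩

theorem stmt_17 (f : Polynomial ℤ) (hmonic : f.Monic) (hirr : Irreducible f)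
    (n : ℕ) (hn : n = f.natDegree) (ξ : Fin n → ℂ)
    (hroots : f.map (algebraMap ℤ ℂ) = ∏ i, (X - C (ξ i)))
    (D : ℤ)
    (hD : (D : ℂ) = ∏ ij ∈ Finset.univ.filter (fun ij : Fin n × Fin n => ij.1 < ij.2),
      (ξ ij.1 - ξ ij.2) ^ 2)
    (hsqfree : Squarefree D) :
    Nonempty ((f.map (algebraMap ℤ ℚ)).Gal ≃* Equiv.Perm (Fin n)) := by
  have hqirr := (hmonic.irreducible_iff_irreducible_map_fraction_map (K := ℚ)).mp hirr
  exact @aux_final f hmonic (f.map (algebraMap ℤ ℚ)) rfl hqirr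
    (f.map (algebraMap ℤ ℚ)).SplittingField _ inferInstance _
    (IsSplittingField.splittingField (f.map (algebraMap ℤ ℚ))) n ξ hroots D hD hsqfree
end
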